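/- arXiv:1306.2669 — 3 statements merged into one kernel-verified Lean document; each statement's English description precedes it below -/
import Mathlib

section
/- Let L be a perfect field of characteristic p > 0 and let M be a function field over constant field L (so L is algebraically closed in M). Let t ∈ M be such that M/L(t) is a finite separable extension of degree n. Let m be a positive integer, let v ∈ M, and let b_0 = 0, b_1, …, b_n be pairwise distinct elements of L with v + b_i ≠ 0 for all i. Assume that for each i = 0, …, n: (a) for every prime w of M, p^m divides w(v + b_i); and (b) every prime w of M with w(v + b_i) ≠ 0 is unramified over L(t). Then v is a p^m-th power of an element of M. -/
/-- A prime of a function field `M` over a constant field `F`: a surjective additive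
valuation `M → ℤ` that is trivial on `F`. -/
structure FFPrime (F M : Type*) [Field F] [Field M] [Algebra F M] where
  v : M → ℤ
  map_mul : ∀ x y : M, x ≠ 0 → y ≠ 0 → v (x * y) = v x + v y
  add_min : ∀ x y : M, x ≠ 0 → y ≠ 0 → x + y ≠ 0 → min (v x) (v y) ≤ v (x + y)
  surj : ∀ n : ℤ, ∃ x : M, x ≠ 0 ∧ v x = n
  triv : ∀ c : F, c ≠ 0 → v (algebraMap F M c) = 0

/-- A prime of `M` is unramified over `F(t)` if some nonzero element of `F(t)` has
valuation `1`. -/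
def FFPrime.UnramifiedOver {F M : Type*} [Field F] [Field M] [Algebra F M]
    (P : FFPrime F M) (t : M) : Prop :=
  ∃ r : M, r ∈ IntermediateField.adjoin F {t} ∧ r ≠ 0 ∧ P.v r = 1

open IsDedekindDomain HeightOneSpectrum WithZero Polynomial

theorem Ideal.exists_eq_pow_of_forall_dvd_multiplicity {R : Type*} [CommRing R]
    [IsDedekindDomain R] {q : ℕ} {I : Ideal R} (hI : I ≠ ⊥)
    (h : ∀ v : HeightOneSpectrum R, q ∣ multiplicity v.asIdeal I) :
    ∃ J : Ideal R, I = J ^ q := by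
  refine ⟨∏ᶠ v : HeightOneSpectrum R, v.asIdeal ^ (multiplicity v.asIdeal I / q), ?_⟩
  rw [finprod_pow, ← Ideal.finprod_heightOneSpectrum_pow_multiplicity hI]
  · refine finprod_congr fun v => ?_
    rw [Ideal.finprod_heightOneSpectrum_pow_multiplicity hI, ← pow_mul, Nat.div_mul_cancel (h v)]
  · refine (Ideal.hasFiniteMulSupport hI).subset fun v hv hv' => hv ?_
    replace hv' := (maxPowDividing_eq_pow_multiplicity hI v).symm.trans hv'
    have : multiplicity v.asIdeal I = 0 := by
      by_contra h0
      exact v.isPrime.ne_top (Ideal.isUnit_iff.1 (IsUnit.of_pow_eq_one hv' h0))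
    simp [this]

theorem Algebra.exists_norm_eq_unit_mul_pow {A K F B : Type*} [CommRing A] [IsDomain A]
    [IsPrincipalIdealRing A] [Field K] [Field F] [Algebra A K] [IsFractionRing A K]
    [Algebra K F] [FiniteDimensional K F] [Algebra.IsSeparable K F] [CommRing B]
    [IsDedekindDomain B] [Algebra A B] [Algebra B F] [Algebra A F] [IsScalarTower A K F]
    [IsScalarTower A B F] [IsIntegralClosure B A F] [IsFractionRing B F]
    {q : ℕ} (hq : q ≠ 0) {x : F} (hx : x ≠ 0)
    (h : ∀ (P : HeightOneSpectrum B) (k : ℤ), P.valuation F x = exp k → (q : ℤ) ∣ k) :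
    ∃ (u : Aˣ) (r : K), Algebra.norm K x = algebraMap A K u * r ^ q := by
  have hAF : Function.Injective (algebraMap A F) := by
    rw [IsScalarTower.algebraMap_eq A K F]
    exact (algebraMap K F).injective.comp (IsFractionRing.injective A K)
  have hAB : Function.Injective (algebraMap A B) := by
    refine Function.Injective.of_comp (f := algebraMap B F) ?_
    rwa [← RingHom.coe_comp, ← IsScalarTower.algebraMap_eq]
  have : Module.Finite A B := IsIntegralClosure.finite A K F B
  have : Module.IsTorsionFree A B := Module.isTorsionFree_iff_algebraMap_injective.2 hAB
  have halg : IsAlgebraic A x :=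
    (IsFractionRing.isAlgebraic_iff A K F).2 (Algebra.IsAlgebraic.isAlgebraic x)
  obtain ⟨a, ha, hax⟩ := halg.exists_integral_multiple
  obtain ⟨b, hb⟩ := IsIntegralClosure.isIntegral_iff (A := B).1
    (show IsIntegral A (algebraMap A F a ^ q * x) by
      obtain ⟨k, rfl⟩ := Nat.exists_eq_succ_of_ne_zero hq
      rw [Algebra.smul_def] at hax
      rw [pow_succ, mul_assoc]
      exact (isIntegral_algebraMap.pow k).mul hax)
  have haF : algebraMap A F a ≠ 0 := by simpa using hAF.ne ha
  have hb0 : b ≠ 0 := by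
    rintro rfl
    rw [map_zero] at hb
    exact mul_ne_zero (pow_ne_zero q haF) hx hb.symm
  obtain ⟨J, hJ⟩ := Ideal.exists_eq_pow_of_forall_dvd_multiplicity (q := q)
    (I := Ideal.span {b}) (by simpa using hb0) (fun P => by
      have h1 : P.valuation F (algebraMap B F b) = _ := P.valuation_of_algebraMap b
      rw [hb, map_mul, map_pow, P.intValuation_eq_exp_neg_multiplicity hb0] at h1
      have hva : P.valuation F (algebraMap A F a) ≠ 0 := by simpa using haF
      have hvx : P.valuation F x ≠ 0 := by simpa using hx
      rw [← exp_log hva, ← exp_log hvx, ← exp_nsmul, ← exp_add, exp_inj] at h1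
      have h2 := h P _ (exp_log hvx).symm
      rw [← Int.natCast_dvd_natCast, ← dvd_neg, ← h1]
      exact dvd_add (by simp) h2)
  have hN := congrArg (Ideal.relNorm A) hJ
  rw [Ideal.relNorm_singleton, map_pow] at hN
  obtain ⟨g, hg⟩ := (IsPrincipalIdealRing.principal (Ideal.relNorm A J)).principal
  rw [hg, Ideal.submodule_span_eq, Ideal.span_singleton_pow,
    Ideal.span_singleton_eq_span_singleton] at hN
  obtain ⟨u, hu⟩ := hN.symm
  have hnorm := Algebra.algebraMap_intNorm (A := A) (K := K) (L := F) (B := B) b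
  rw [hb, ← hu, map_mul, map_mul, map_pow, map_pow, IsScalarTower.algebraMap_apply A K F,
    Algebra.norm_algebraMap] at hnorm
  have haK : algebraMap A K a ≠ 0 := by simpa using (IsFractionRing.injective A K).ne ha
  refine ⟨u, algebraMap A K g / algebraMap A K a ^ Module.finrank K F, ?_⟩
  rw [div_pow, mul_div_assoc', eq_div_iff (pow_ne_zero _ (pow_ne_zero _ haK))]
  linear_combination -hnorm

theorem Polynomial.exists_map_eq_of_eval_eq {k K ι : Type*} [Field k] [Field K] (φ : k →+* K)
    [Fintype ι] {f : K[X]} (hf : f.natDegree < Fintype.card ι) (x y : ι → k)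
    (hx : Function.Injective x) (h : ∀ i, f.eval (φ (x i)) = φ (y i)) :
    ∃ g : k[X], g.map φ = f := by
  classical
  refine ⟨Lagrange.interpolate Finset.univ x y, ?_⟩
  refine Polynomial.eq_of_degrees_lt_of_eval_index_eq (v := φ ∘ x) Finset.univ
    ((φ.injective.comp hx).injOn) ?_ ?_ ?_
  · rw [degree_map]
    exact Lagrange.degree_interpolate_lt _ hx.injOn
  · exact degree_le_natDegree.trans_lt (by simpa using hf)
  · intro i _
    rw [Function.comp_apply, eval_map, eval₂_at_apply, h,
      Lagrange.eval_interpolate_at_node _ hx.injOn (Finset.mem_univ i)]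

theorem exists_pow_eq_of_minpoly_eq_map_iterateFrobenius {K M : Type*} [Field K] [Field M]
    [Algebra K M] (p : ℕ) [Fact p.Prime] [CharP K p] (m : ℕ) {z : M} (hz : IsSeparable K z)
    {g : K[X]} (hg : g.map (iterateFrobenius K p m) = minpoly K z) : ∃ c : M, z = c ^ p ^ m := by
  have : CharP M p := charP_of_injective_algebraMap (algebraMap K M).injective p
  have : CharP (AlgebraicClosure M) p :=
    charP_of_injective_algebraMap (algebraMap M (AlgebraicClosure M)).injective p
  have hq : p ^ m ≠ 0 := pow_ne_zero _ (Fact.out : p.Prime).ne_zero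
  obtain ⟨u, hu⟩ := IsAlgClosed.exists_pow_nat_eq (algebraMap M (AlgebraicClosure M) z)
    (Nat.pos_of_ne_zero hq)
  have hgs : g.Separable := by
    rw [← separable_map (iterateFrobenius K p m), hg]; exact hz
  have hroot : aeval u g = 0 := by
    rw [← pow_eq_zero_iff hq, ← iterateFrobenius_def, aeval_def, hom_eval₂,
      ← RingHom.iterateFrobenius_comm, ← eval₂_map, hg, iterateFrobenius_def, hu, ← aeval_def,
      aeval_algebraMap_apply, minpoly.aeval, map_zero]
  have hus : IsSeparable K u := hgs.of_dvd (minpoly.dvd K u hroot)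
  have h1 : u ∈ separableClosure M (AlgebraicClosure M) := hus.tower_top M
  have h2 : u ∈ perfectClosure M (AlgebraicClosure M) :=
    (mem_perfectClosure_iff_pow_mem p).2 ⟨m, z, hu.symm⟩
  have h3 := IntermediateField.mem_inf.2 ⟨h1, h2⟩
  rw [separableClosure_inf_perfectClosure, IntermediateField.mem_bot] at h3
  obtain ⟨c, rfl⟩ := h3
  exact ⟨c, (algebraMap M (AlgebraicClosure M)).injective (by rw [map_pow, hu])⟩

/-- The prime of `M` attached to a maximal ideal of a Dedekind domain containing the constants. -/
noncomputable def FFPrime.ofHeightOneSpectrum (L M : Type*) {B : Type*} [Field L] [Field M]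
    [Algebra L M] [CommRing B] [IsDedekindDomain B] [Algebra L B] [Algebra B M]
    [IsScalarTower L B M] [IsFractionRing B M] (P : HeightOneSpectrum B) : FFPrime L M where
  v x := -log (P.valuation M x)
  map_mul x y hx hy := by
    rw [Valuation.map_mul, log_mul (by simpa using hx) (by simpa using hy), neg_add]
  add_min x y hx hy hxy := by
    have hx' : P.valuation M x ≠ 0 := by simpa using hx
    have hy' : P.valuation M y ≠ 0 := by simpa using hy
    have hxy' : P.valuation M (x + y) ≠ 0 := by simpa using hxy
    rcases le_max_iff.1 ((P.valuation M).map_add x y) with h | h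
    · exact (min_le_left _ _).trans (neg_le_neg ((log_le_log hxy' hx').2 h))
    · exact (min_le_right _ _).trans (neg_le_neg ((log_le_log hxy' hy').2 h))
  surj n := by
    obtain ⟨x, hx⟩ := P.valuation_surjective M (exp (-n))
    refine ⟨x, ?_, by rw [hx, log_exp, neg_neg]⟩
    rintro rfl
    exact exp_ne_zero (hx.symm.trans (map_zero _))
  triv c hc := by
    have hu : IsUnit (algebraMap L B c) := (IsUnit.mk0 c hc).map (algebraMap L B)
    have h1 : P.valuation M (algebraMap L M c) = 1 := by
      rw [IsScalarTower.algebraMap_apply L B M, valuation_eq_one_iff_notMem]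
      exact fun h => P.isPrime.ne_top (Ideal.eq_top_of_isUnit_mem _ h hu)
    rw [h1, log_one, neg_zero]

theorem FFPrime.exists_apply_algebraMap_eq_mul_log {L F M B : Type*} [Field L] [Field F] [Field M]
    [Algebra L F] [Algebra L M] [Algebra F M] [IsScalarTower L F M] [FiniteDimensional F M]
    [Algebra.IsSeparable F M] [CommRing B] [IsDedekindDomain B] [Algebra L B] [Algebra B F]
    [IsScalarTower L B F] [IsFractionRing B F] (P : HeightOneSpectrum B) :
    ∃ (Q : FFPrime L M) (e : ℤ), e ≠ 0 ∧
      ∀ x : F, Q.v (algebraMap F M x) = e * log (P.valuation F x) := by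
  let _ : Algebra B M := ((algebraMap F M).comp (algebraMap B F)).toAlgebra
  have : IsScalarTower B F M := .of_algebraMap_eq fun _ => rfl
  have : IsScalarTower L B M := .of_algebraMap_eq fun c => by
    rw [IsScalarTower.algebraMap_apply L F M, IsScalarTower.algebraMap_apply L B F]
    rfl
  let C := integralClosure B M
  have : IsDedekindDomain C := integralClosure.isDedekindDomain B F M
  have : IsFractionRing C M := integralClosure.isFractionRing_of_finite_extension F M
  have hBM : Function.Injective (algebraMap B M) :=
    (algebraMap F M).injective.comp (IsFractionRing.injective B F)
  have hBC : Function.Injective (algebraMap B C) := by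
    refine Function.Injective.of_comp (f := algebraMap C M) ?_
    rwa [← RingHom.coe_comp, ← IsScalarTower.algebraMap_eq]
  have : FaithfulSMul B C := (faithfulSMul_iff_algebraMap_injective B C).2 hBC
  have : Module.IsTorsionFree B C := Module.isTorsionFree_iff_algebraMap_injective.2 hBC
  have := P.isMaximal
  obtain ⟨Q, hQ, hQP⟩ := Ideal.exists_maximal_ideal_liesOver_of_isIntegral (S := C) P.asIdeal
  let w : HeightOneSpectrum C := ⟨Q, hQ.isPrime, Ideal.ne_bot_of_liesOver_of_ne_bot P.ne_bot Q⟩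
  have : w.asIdeal.LiesOver P.asIdeal := hQP
  refine ⟨FFPrime.ofHeightOneSpectrum L M w, -(P.asIdeal.ramificationIdx' w.asIdeal : ℤ),
    by simpa using Ideal.IsDedekindDomain.ramificationIdx'_ne_zero_of_liesOver w.asIdeal P.ne_bot,
    fun x => ?_⟩
  change -log (w.valuation M (algebraMap F M x)) = _
  rw [← valuation_liesOver M P w x, log_pow, nsmul_eq_mul, neg_mul]

theorem FFPrime.exists_norm_eq_unit_mul_pow {L A K F M : Type*} [Field L] [CommRing A] [IsDomain A]
    [IsPrincipalIdealRing A] [Field K] [Field F] [Field M] [Algebra L A] [Algebra A K]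
    [IsFractionRing A K] [Algebra K F] [Algebra A F] [IsScalarTower A K F] [Algebra L F]
    [IsScalarTower L A F] [Algebra F M] [Algebra L M] [IsScalarTower L F M]
    [FiniteDimensional K F] [Algebra.IsSeparable K F]
    [FiniteDimensional F M] [Algebra.IsSeparable F M] {q : ℕ} (hq : q ≠ 0) {x : F} (hx : x ≠ 0)
    (hdvd : ∀ Q : FFPrime L M, (q : ℤ) ∣ Q.v (algebraMap F M x))
    (hunram : ∀ Q : FFPrime L M, Q.v (algebraMap F M x) ≠ 0 →
      ∃ r : F, Q.v (algebraMap F M r) = 1) :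
    ∃ (u : Aˣ) (r : K), Algebra.norm K x = algebraMap A K u * r ^ q := by
  let B := integralClosure A F
  have : IsDedekindDomain B := integralClosure.isDedekindDomain A K F
  have : IsFractionRing B F := integralClosure.isFractionRing_of_finite_extension K F
  refine Algebra.exists_norm_eq_unit_mul_pow (F := F) (B := B) hq hx fun P k hk => ?_
  obtain ⟨Q, e, he, hQ⟩ := FFPrime.exists_apply_algebraMap_eq_mul_log (L := L) (F := F) (M := M) P
  have hx' : Q.v (algebraMap F M x) = e * k := by rw [hQ, hk, log_exp]
  by_cases h0 : Q.v (algebraMap F M x) = 0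
  · rw [hx', mul_eq_zero, or_iff_right he] at h0
    exact h0 ▸ dvd_zero _
  · obtain ⟨r, hr⟩ := hunram Q h0
    rw [hQ] at hr
    exact (IsUnit.of_mul_eq_one _ hr).dvd_mul_left.1 (hx' ▸ hdvd Q)

theorem minpoly.eval_eq_norm_algebraMap_sub {K F : Type*} [Field K] [Field F] [Algebra K F]
    (pb : PowerBasis K F) (c : K) :
    (minpoly K pb.gen).eval c = Algebra.norm K (algebraMap K F c - pb.gen) := by
  rw [← charpoly_leftMulMatrix, Matrix.eval_charpoly, Algebra.norm_eq_matrix_det pb.basis, map_sub,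
    AlgHom.commutes]
  rfl

open IntermediateField.algebraAdjoinAdjoin in
/-- Let `L` be a perfect field of characteristic `p > 0` and `M` a function field with
constant field `L`, with `M/L(t)` finite separable of degree `n`. Let `m ≥ 1`, `z ∈ M`,
and `b_0 = 0, b_1, …, b_n` pairwise distinct elements of `L` with `z + b_i ≠ 0`. If for
each `i` the divisor of `z + b_i` is a `p^m`-th power (i.e. `p^m` divides the order of
`z + b_i` at every prime) and `z + b_i` has no zeros or poles at primes ramifying in
`M/L(t)`, then `z` is a `p^m`-th power in `M`. -/
theorem stmt_5 {L M : Type*} [Field L] [Field M] [Algebra L M]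
    (p : ℕ) (hp : p.Prime) [CharP L p] [PerfectField L]
    (t : M) (htrans : Transcendental L t)
    (hfin : FiniteDimensional (IntermediateField.adjoin L {t}) M)
    (hsep : Algebra.IsSeparable (IntermediateField.adjoin L {t}) M)
    (hconst : ∀ x : M, IsAlgebraic L x → x ∈ (algebraMap L M).range)
    (n : ℕ) (hn : Module.finrank (IntermediateField.adjoin L {t}) M = n)
    (m : ℕ) (hm : 1 ≤ m)
    (z : M) (b : Fin (n + 1) → L) (hb0 : b 0 = 0) (hb : Function.Injective b)
    (hz : ∀ i, z + algebraMap L M (b i) ≠ 0)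
    (hdiv : ∀ (P : FFPrime L M) (i : Fin (n + 1)),
      (p ^ m : ℤ) ∣ P.v (z + algebraMap L M (b i)))
    (hunram : ∀ (P : FFPrime L M) (i : Fin (n + 1)),
      P.v (z + algebraMap L M (b i)) ≠ 0 → P.UnramifiedOver t) :
    ∃ c : M, z = c ^ p ^ m := by
  have : Fact p.Prime := ⟨hp⟩
  let A := Algebra.adjoin L {t}
  let K := IntermediateField.adjoin L {t}
  let F := IntermediateField.adjoin K {z}
  have hq : p ^ m ≠ 0 := pow_ne_zero _ hp.ne_zero
  let e := Polynomial.algEquivOfTranscendental L t htrans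
  have : IsPrincipalIdealRing A := .of_surjective e e.surjective
  have hzint : IsIntegral K z := .of_finite K z
  have : CharP K p := charP_of_injective_algebraMap (algebraMap L K).injective p
  have : IsScalarTower L F M := .of_algebraMap_eq fun _ => rfl
  have : IsScalarTower L A F := .of_algebraMap_eq fun _ => rfl
  let pb := IntermediateField.adjoin.powerBasis hzint
  have hgen : algebraMap F M pb.gen = z := rfl
  have hmin : minpoly K pb.gen = minpoly K z :=
    (minpoly.algebraMap_eq (algebraMap F M).injective pb.gen).symm
  have hval (i : Fin (n + 1)) :
      ∃ r : K, (minpoly K z).eval (algebraMap L K (-b i)) = r ^ p ^ m := by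
    have hx : algebraMap F M (pb.gen + algebraMap L F (b i)) = z + algebraMap L M (b i) := by
      rw [map_add, hgen, ← IsScalarTower.algebraMap_apply]
    obtain ⟨u, r, hr⟩ := FFPrime.exists_norm_eq_unit_mul_pow (L := L) (A := A) (K := K) (F := F)
      (M := M) hq (x := pb.gen + algebraMap L F (b i))
      (fun h => hz i (by rw [← hx, h, map_zero])) (fun Q => by
        rw [hx]
        exact_mod_cast hdiv Q i) (fun Q h => by
        rw [hx] at h
        obtain ⟨r, hr, -, hr1⟩ := hunram Q i h
        exact ⟨algebraMap K F ⟨r, hr⟩, hr1⟩)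
    obtain ⟨c, -, hc⟩ := Polynomial.isUnit_iff.1 (u.isUnit.map e.symm)
    obtain ⟨d, hd⟩ := (iterateFrobeniusEquiv L p m).surjective
      ((-1) ^ Module.finrank K F * c)
    rw [iterateFrobeniusEquiv_def] at hd
    have hu : algebraMap A K u = algebraMap L K c := by
      rw [← e.apply_symm_apply (u : A), ← hc]
      simp only [e, algEquivOfTranscendental_apply, aeval_C]
      exact (IsScalarTower.algebraMap_apply L A K c).symm
    refine ⟨algebraMap L K d * r, ?_⟩
    rw [← hmin, minpoly.eval_eq_norm_algebraMap_sub, mul_pow, ← map_pow, hd, map_mul, ← hu,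
      mul_assoc, ← hr, map_pow, ← Algebra.norm_algebraMap, ← map_mul]
    congr 1
    rw [← IsScalarTower.algebraMap_apply, ← IsScalarTower.algebraMap_apply, map_neg, map_neg,
      map_one]
    ring
  choose r hr using hval
  have hcard : (minpoly K z).natDegree < Fintype.card (Fin (n + 1)) := by
    rw [Fintype.card_fin, Nat.lt_succ_iff, ← hn]
    exact minpoly.natDegree_le z
  have hroot (i : Fin (n + 1)) : ∃ d : L, d ^ p ^ m = -b i :=
    (iterateFrobeniusEquiv L p m).surjective (-b i)
  choose d hd using hroot
  obtain ⟨g, hg⟩ := Polynomial.exists_map_eq_of_eval_eq (iterateFrobenius K p m) hcard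
    (fun i => algebraMap L K (d i)) r
    ((algebraMap L K).injective.comp fun i j hij =>
      hb (neg_injective (by simp only [← hd, hij])))
    (fun i => by rw [iterateFrobenius_def, ← map_pow, hd, hr, iterateFrobenius_def])
  exact exists_pow_eq_of_minpoly_eq_map_iterateFrobenius p m
    (Algebra.IsSeparable.isSeparable K z) hg
end

section
/- Let L be a field of characteristic p > 0, let a ∈ L, and let δ be a root of X^p − X − a in an algebraic closure of L with δ ∉ L (so [L(δ):L] = p). Let u : L^× → ℤ be a normalized discrete valuation on L and let w : L(δ)^× → ℤ be a normalized discrete valuation on L(δ) lying above u, i.e. there is an integer e ≥ 1 (the ramification index) with w(x) = e·u(x) for all x ∈ L^×. Then: (i) if u(a) ≥ 0, then e = 1; (ii) if u(a) < 0 and p ∤ u(a), then e = p. -/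
open Polynomial in
theorem splits_X_pow_sub_X_of_charP {k : Type*} [Field k] (p : ℕ) [Fact p.Prime] [CharP k p] :
    (X ^ p - X : k[X]).Splits := by
  have h := (FiniteField.splits_X_pow_card_sub_X (p := p) (K := ZMod p)).map (ZMod.castHom dvd_rfl k)
  simpa using h

open Polynomial in
/-- If an Artin–Schreier polynomial has a root `x` in an extension `κ` of `k`, and `x` is a root of
a nonzero polynomial over `k` of degree less than the characteristic, then `x` lies in `k`. -/
theorem mem_range_of_pow_sub_self_mem_range {k κ : Type*} [Field k] [Field κ] [Algebra k κ] {p : ℕ}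
    [Fact p.Prime] [CharP k p] {x : κ} {b : k} (hx : x ^ p - x = algebraMap k κ b)
    {f : k[X]} (hf0 : f ≠ 0) (hfd : f.natDegree < p) (hf : aeval x f = 0) :
    x ∈ (algebraMap k κ).range := by
  have : CharP κ p := charP_of_injective_algebraMap (algebraMap k κ).injective p
  have hp : p.Prime := Fact.out
  have hint : IsIntegral k x := (show IsAlgebraic k x from ⟨f, hf0, hf⟩).isIntegral
  have hdvd : (minpoly k x).map (algebraMap k κ) ∣ (X ^ p - X : κ[X]).comp (X - C x) := by
    have h : (X ^ p - X : κ[X]).comp (X - C x) = (X ^ p - X - C b : k[X]).map (algebraMap k κ) := by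
      simp only [sub_comp, pow_comp, X_comp, Polynomial.map_sub, Polynomial.map_pow, map_X, map_C,
        ← hx, map_pow, map_sub, sub_pow_char]
      ring
    rw [h]
    exact map_dvd (mapRingHom (algebraMap k κ)) (minpoly.dvd k x (by simp [hx]))
  have hne : (X ^ p - X : κ[X]).comp (X - C x) ≠ 0 := by
    intro h
    have hd := congrArg natDegree h
    rw [natDegree_comp, FiniteField.X_pow_card_sub_X_natDegree_eq _ hp.one_lt, natDegree_X_sub_C,
      natDegree_zero, mul_one] at hd
    exact hp.ne_zero hd
  have hsplit : ((minpoly k x).map (algebraMap k κ)).Splits :=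
    ((splits_X_pow_sub_X_of_charP p).comp_X_sub_C x).of_dvd hne hdvd
  have hroot : ∀ r ∈ ((minpoly k x).map (algebraMap k κ)).roots,
      r - x ∈ (algebraMap k κ).range := by
    intro r hr
    have hr' : ((X ^ p - X : κ[X]).comp (X - C x)).IsRoot r :=
      (isRoot_of_mem_roots hr).dvd hdvd
    refine (splits_X_pow_sub_X_of_charP (k := k) p).mem_range_of_isRoot
      (FiniteField.X_pow_card_sub_X_ne_zero _ hp.one_lt) ?_
    simpa [IsRoot] using hr'
  have hsum : ((minpoly k x).map (algebraMap k κ)).roots.sum ∈ (algebraMap k κ).range := by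
    have h := hsplit.nextCoeff_eq_neg_sum_roots_of_monic ((minpoly.monic hint).map _)
    rw [nextCoeff_map (algebraMap k κ).injective] at h
    rw [← neg_mem_iff, ← h]
    exact ⟨_, rfl⟩
  have hsum' : (((minpoly k x).map (algebraMap k κ)).roots.map (· - x)).sum ∈
      (algebraMap k κ).range :=
    multiset_sum_mem _ fun y hy => by
      obtain ⟨r, hr, rfl⟩ := Multiset.mem_map.1 hy
      exact hroot r hr
  rw [Multiset.sum_map_sub, Multiset.map_id', Multiset.map_const', Multiset.sum_replicate,
    ← hsplit.natDegree_eq_card_roots, natDegree_map] at hsum'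
  obtain ⟨c, hc⟩ := sub_mem hsum hsum'
  rw [sub_sub_cancel, nsmul_eq_mul] at hc
  have hd : ((minpoly k x).natDegree : k) ≠ 0 := by
    rw [Ne, CharP.cast_eq_zero_iff k p]
    exact Nat.not_dvd_of_pos_of_lt (minpoly.natDegree_pos hint)
      ((natDegree_le_of_dvd (minpoly.dvd k x hf) hf0).trans_lt hfd)
  refine ⟨c / (minpoly k x).natDegree, ?_⟩
  have hd' : ((minpoly k x).natDegree : κ) ≠ 0 := by
    simpa using (map_ne_zero (algebraMap k κ)).2 hd
  rw [map_div₀, hc, map_natCast, mul_div_cancel_left₀ _ hd']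

open Polynomial in
theorem exists_natDegree_lt_aeval_eq_of_adjoin_eq_top {L M : Type*} [Field L] [Field M]
    [Algebra L M] {δ : M} (hgen : IntermediateField.adjoin L {δ} = ⊤) {P : L[X]} (hP : P.Monic)
    (hP1 : P ≠ 1) (hδ : aeval δ P = 0) (x : M) :
    ∃ f : L[X], f.natDegree < P.natDegree ∧ aeval δ f = x := by
  have hx : x ∈ (IntermediateField.adjoin L {δ}).toSubalgebra := by
    rw [hgen]; trivial
  rw [IntermediateField.adjoin_simple_toSubalgebra_of_isAlgebraic ⟨P, hP.ne_zero, hδ⟩,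
    Algebra.adjoin_singleton_eq_range_aeval] at hx
  obtain ⟨f, rfl⟩ := hx
  exact ⟨f %ₘ P, natDegree_modByMonic_lt f hP hP1, aeval_modByMonic_eq_self_of_root hδ⟩

open Polynomial IsLocalRing in
/-- Every nonzero polynomial over a valued field is a nonzero scalar multiple of a primitive
polynomial over the valuation ring. -/
theorem Valuation.exists_eq_C_mul_map_residue_ne_zero {L Γ₀ : Type*} [Field L]
    [LinearOrderedCommGroupWithZero Γ₀] (v : Valuation L Γ₀) {f : L[X]} (hf : f ≠ 0) :
    ∃ c ≠ 0, ∃ F : v.valuationSubring[X], F.natDegree = f.natDegree ∧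
      F.map (residue v.valuationSubring) ≠ 0 ∧
      f = C c * F.map (algebraMap v.valuationSubring L) := by
  obtain ⟨i, hi, hmax⟩ := f.support.exists_max_image (fun i => v (f.coeff i))
    (support_nonempty.2 hf)
  have hc : f.coeff i ≠ 0 := mem_support_iff.1 hi
  have hlift : C (f.coeff i)⁻¹ * f ∈ lifts (algebraMap v.valuationSubring L) := by
    rw [lifts_iff_coeff_lifts]
    intro n
    refine ⟨⟨(C (f.coeff i)⁻¹ * f).coeff n, ?_⟩, rfl⟩
    rw [v.mem_valuationSubring_iff, coeff_C_mul, map_mul, map_inv₀]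
    by_cases hn : n ∈ f.support
    · exact inv_mul_le_one_of_le₀ (hmax n hn) zero_le
    · simp [notMem_support_iff.1 hn]
  obtain ⟨F, hF, hFd⟩ := exists_natDegree_eq_of_mem_lifts hlift
  refine ⟨f.coeff i, hc, F, ?_, fun h => ?_, ?_⟩
  · rw [hFd, natDegree_C_mul (inv_ne_zero hc)]
  · have h1 : F.coeff i = 1 := by
      apply Subtype.coe_injective
      have := congrArg (coeff · i) hF
      simpa [hc] using this
    simpa [h1] using congrArg (coeff · i) h
  · rw [hF, ← mul_assoc, ← C_mul, mul_inv_cancel₀ hc, C_1, one_mul]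

theorem Valuation.exists_map_sum_eq_of_injOn {R ι Γ₀ : Type*} [Ring R]
    [LinearOrderedCommGroupWithZero Γ₀] (v : Valuation R Γ₀) (s : Finset ι) (f : ι → R)
    (hinj : Set.InjOn (fun i => v (f i)) {i ∈ s | f i ≠ 0}) (hsum : ∑ i ∈ s, f i ≠ 0) :
    ∃ i ∈ s, f i ≠ 0 ∧ v (∑ i ∈ s, f i) = v (f i) := by
  classical
  rw [← Finset.sum_filter_ne_zero] at hsum ⊢
  obtain ⟨i, hi, hmax⟩ := (s.filter (f · ≠ 0)).exists_max_image (fun i => v (f i))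
    (Finset.nonempty_of_sum_ne_zero hsum)
  have hi' := Finset.mem_filter.1 hi
  refine ⟨i, hi'.1, hi'.2, v.map_sum_eq_of_lt hi fun j hj => ?_⟩
  obtain ⟨hj, hji⟩ := Finset.mem_sdiff.1 hj
  refine (hmax j hj).lt_of_ne fun h => hji ?_
  exact Finset.mem_singleton.2 (hinj (Finset.mem_filter.1 hj) hi' h)

theorem Valuation.map_le_one_of_pow_sub_self {R Γ₀ : Type*} [Ring R]
    [LinearOrderedCommGroupWithZero Γ₀] (v : Valuation R Γ₀) {n : ℕ} (hn : 1 < n) {x : R}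
    (hx : v (x ^ n - x) ≤ 1) : v x ≤ 1 := by
  by_contra! h
  have hlt : v x < v (x ^ n) := by
    rw [map_pow]
    exact lt_self_pow₀ h hn
  rw [v.map_sub_eq_of_lt_left hlt] at hx
  exact (h.trans hlt).not_ge hx

open WithZero in
theorem Valuation.exists_map_sub_lt_of_pow_sub_self {L M : Type*} [Field L] [Field M] [Algebra L M]
    {p : ℕ} [Fact p.Prime] [CharP M p] (v : Valuation M ℤᵐ⁰) {a c : L} {δ : M}
    (hδ : δ ^ p - δ = algebraMap L M a) (hc : v (δ - algebraMap L M c) < 1) {γ : ℤᵐ⁰}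
    (hγ : γ ≠ 0) : ∃ b : L, v (δ - algebraMap L M b) < γ := by
  have hp : p.Prime := Fact.out
  have key : ∀ n : ℕ, ∃ b : L, v (δ - algebraMap L M b) < exp (-(n : ℤ)) := by
    intro n
    induction n with
    | zero => exact ⟨c, by simpa using hc⟩
    | succ n ih =>
      obtain ⟨b, hb⟩ := ih
      refine ⟨b ^ p - a, ?_⟩
      have h : δ - algebraMap L M (b ^ p - a) = (δ - algebraMap L M b) ^ p := by
        rw [sub_pow_char, _root_.map_sub, map_pow, ← hδ]
        ring
      rw [h, map_pow]
      by_cases h0 : v (δ - algebraMap L M b) = 0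
      · rw [h0, zero_pow hp.ne_zero]
        simp
      · obtain ⟨m, hm⟩ : ∃ m : ℤ, v (δ - algebraMap L M b) = exp m := ⟨_, (exp_log h0).symm⟩
        rw [hm, exp_lt_exp] at hb
        rw [hm, ← exp_nsmul, exp_lt_exp, nsmul_eq_mul]
        have := hp.two_le
        push_cast
        nlinarith
  obtain ⟨n, hn⟩ : ∃ n : ℕ, -(n : ℤ) ≤ log γ := ⟨(log γ).natAbs, by omega⟩
  obtain ⟨b, hb⟩ := key n
  refine ⟨b, hb.trans_le ?_⟩
  rwa [← exp_log hγ, exp_le_exp]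

open Polynomial IsLocalRing WithZero in
/-- An Artin–Schreier extension generated by an integral element has the same value group as the
base field. -/
theorem Valuation.exists_map_algebraMap_eq_of_pow_sub_self {L M : Type*} [Field L] [Field M]
    [Algebra L M] {p : ℕ} [Fact p.Prime] [CharP L p] (vL : Valuation L ℤᵐ⁰) (v : Valuation M ℤᵐ⁰)
    [vL.HasExtension v] {a : L} {δ : M} (hδ : δ ^ p - δ = algebraMap L M a)
    (hδ1 : v δ ≤ 1) {f : L[X]} (hfd : f.natDegree < p) (hf : aeval δ f ≠ 0) :
    ∃ c : L, v (aeval δ f) = v (algebraMap L M c) := by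
  have : CharP M p := charP_of_injective_algebraMap (algebraMap L M).injective p
  have hf0 : f ≠ 0 := by rintro rfl; simp at hf
  obtain ⟨s, hs, F, hFd, hF, rfl⟩ := vL.exists_eq_C_mul_map_residue_ne_zero hf0
  let d : v.valuationSubring := ⟨δ, hδ1⟩
  have hval : aeval δ (F.map (algebraMap vL.valuationSubring L)) = (aeval d F : M) := by
    rw [aeval_map_algebraMap]
    exact aeval_algebraMap_apply M d F
  suffices h : ∃ c : L, v (aeval d F : M) = v (algebraMap L M c) by
    obtain ⟨c, hc⟩ := h
    exact ⟨s * c, by rw [map_mul, aeval_C, hval, map_mul, hc, ← map_mul, ← map_mul]⟩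
  have ha1 : vL a ≤ 1 := by
    rw [← Valuation.HasExtension.val_map_le_one_iff vL v, ← hδ]
    exact v.map_sub_le (by rw [map_pow]; exact pow_le_one₀ zero_le hδ1) hδ1
  let a' : vL.valuationSubring := ⟨a, ha1⟩
  have hd : d ^ p - d = algebraMap vL.valuationSubring v.valuationSubring a' :=
    Subtype.ext hδ
  by_cases hres : residue _ d ∈ (algebraMap (ResidueField vL.valuationSubring)
      (ResidueField v.valuationSubring)).range
  · obtain ⟨b, hb⟩ := hres
    obtain ⟨b, rfl⟩ := residue_surjective b
    have hb1 : v (δ - algebraMap L M b) < 1 := by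
      rw [Valuation.HasExtension.algebraMap_residue_eq_residue_algebraMap, eq_comm,
        ← sub_eq_zero, ← _root_.map_sub, residue_eq_zero_iff] at hb
      exact (Valuation.mem_maximalIdeal_iff M v).1 hb
    have hne : (aeval d F : M) ≠ 0 := by
      rw [← hval]
      rw [map_mul] at hf
      exact right_ne_zero_of_mul hf
    obtain ⟨c, hc⟩ := v.exists_map_sub_lt_of_pow_sub_self hδ hb1
      (γ := min 1 (v (aeval d F : M))) (ne_of_gt (lt_min zero_lt_one (zero_lt_iff.2 (v.ne_zero_iff.2 hne))))
    have hc1 : vL c ≤ 1 := by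
      rw [← Valuation.HasExtension.val_map_le_one_iff vL v]
      have := v.map_sub_le hδ1 (hc.le.trans (min_le_left _ _))
      rwa [sub_sub_cancel] at this
    let c' : vL.valuationSubring := ⟨c, hc1⟩
    obtain ⟨q, hq⟩ := sub_dvd_eval_sub d (algebraMap _ v.valuationSubring c')
      (F.map (algebraMap vL.valuationSubring v.valuationSubring))
    rw [eval_map_algebraMap, eval_map_algebraMap, aeval_algebraMap_apply] at hq
    refine ⟨(aeval c' F : vL.valuationSubring), ?_⟩
    have hq' : (aeval d F : M) - algebraMap L M (aeval c' F : vL.valuationSubring) =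
        (δ - algebraMap L M c) * q := congrArg Subtype.val hq
    have hlt : v ((aeval d F : M) - algebraMap L M (aeval c' F : vL.valuationSubring)) <
        v (aeval d F : M) := by
      rw [hq', map_mul]
      exact (mul_le_of_le_one_right' q.2).trans_lt (hc.trans_le (min_le_right _ _))
    rw [← v.map_sub_eq_of_lt_left hlt, sub_sub_cancel]
  · refine ⟨1, ?_⟩
    rw [map_one, map_one]
    have hchar : CharP (ResidueField vL.valuationSubring) p := by
      rw [CharP.charP_iff_prime_eq_zero Fact.out, ← map_natCast (residue vL.valuationSubring)]
      have : (p : vL.valuationSubring) = 0 := Subtype.ext (by simp)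
      rw [this, map_zero]
    have hne : residue _ (aeval d F) ≠ 0 := by
      intro h0
      refine hres (mem_range_of_pow_sub_self_mem_range (p := p)
        (b := residue _ a') ?_ hF ?_ ?_)
      · rw [Valuation.HasExtension.algebraMap_residue_eq_residue_algebraMap, ← hd,
          _root_.map_sub, map_pow]
      · refine natDegree_map_le.trans_lt ?_
        rwa [natDegree_C_mul hs, natDegree_map_eq_of_injective Subtype.val_injective] at hfd
      · rw [← h0]
        simp only [aeval_def, eval₂_map, hom_eval₂]
        rfl
    rw [Ne, residue_eq_zero_iff] at hne
    refine le_antisymm (aeval d F).2 (not_lt.1 fun h => hne ?_)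
    exact (Valuation.mem_maximalIdeal_iff M v).2 h

open WithZero in
/-- The valuation with values in `ℤᵐ⁰` attached to an additive function on the nonzero elements. -/
noncomputable def Valuation.ofInt {K : Type*} [Field K] (w : K → ℤ)
    (hmul : ∀ x y : K, x ≠ 0 → y ≠ 0 → w (x * y) = w x + w y)
    (hadd : ∀ x y : K, x ≠ 0 → y ≠ 0 → x + y ≠ 0 → min (w x) (w y) ≤ w (x + y)) :
    Valuation K ℤᵐ⁰ :=
  haveI := Classical.decEq K
  { toFun := fun x => if x = 0 then 0 else exp (-w x)
    map_zero' := if_pos rfl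
    map_one' := by
      have h := hmul 1 1 one_ne_zero one_ne_zero
      rw [mul_one, left_eq_add] at h
      simp [h]
    map_mul' := fun x y => by
      by_cases hx : x = 0
      · simp [hx]
      by_cases hy : y = 0
      · simp [hy]
      simp only [mul_eq_zero, hx, hy, or_self, if_false]
      rw [hmul x y hx hy, neg_add, exp_add]
    map_add_le_max' := fun x y => by
      by_cases hx : x = 0
      · simp [hx]
      by_cases hy : y = 0
      · simp [hy]
      by_cases hxy : x + y = 0
      · simp [hxy]
      simp only [hx, hy, hxy, if_false, le_max_iff, exp_le_exp]
      have := hadd x y hx hy hxy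
      omega }

open WithZero in
theorem Valuation.ofInt_apply {K : Type*} [Field K] {w : K → ℤ}
    (hmul : ∀ x y : K, x ≠ 0 → y ≠ 0 → w (x * y) = w x + w y)
    (hadd : ∀ x y : K, x ≠ 0 → y ≠ 0 → x + y ≠ 0 → min (w x) (w y) ≤ w (x + y))
    {x : K} (hx : x ≠ 0) : Valuation.ofInt w hmul hadd x = exp (-w x) :=
  if_neg hx

open Polynomial WithZero in
/-- Let `L` be a field of characteristic `p > 0`, `a ∈ L`, and `δ` a root of
`X^p - X - a` generating an extension `M = L(δ)` with `δ ∉ L`. Let `u` be a normalized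
discrete valuation on `L` and `w` one on `M` lying above `u` with ramification index
`e`. Then `u(a) ≥ 0` implies `e = 1`, and `u(a) < 0` together with `p ∤ u(a)` implies
`e = p`. -/
theorem stmt_9 {L M : Type*} [Field L] [Field M] [Algebra L M]
    (p : ℕ) (hp : p.Prime) [CharP L p]
    (a : L) (δ : M)
    (hδ : δ ^ p - δ - algebraMap L M a = 0)
    (hδL : δ ∉ (algebraMap L M).range)
    (hgen : IntermediateField.adjoin L {δ} = ⊤)
    (u : L → ℤ)
    (humul : ∀ x y : L, x ≠ 0 → y ≠ 0 → u (x * y) = u x + u y)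
    (huadd : ∀ x y : L, x ≠ 0 → y ≠ 0 → x + y ≠ 0 → min (u x) (u y) ≤ u (x + y))
    (husurj : ∀ n : ℤ, ∃ x : L, x ≠ 0 ∧ u x = n)
    (w : M → ℤ)
    (hwmul : ∀ x y : M, x ≠ 0 → y ≠ 0 → w (x * y) = w x + w y)
    (hwadd : ∀ x y : M, x ≠ 0 → y ≠ 0 → x + y ≠ 0 → min (w x) (w y) ≤ w (x + y))
    (hwsurj : ∀ n : ℤ, ∃ x : M, x ≠ 0 ∧ w x = n)
    (e : ℕ) (he : 1 ≤ e)
    (habove : ∀ x : L, x ≠ 0 → w (algebraMap L M x) = e * u x) :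
    (0 ≤ u a → e = 1) ∧ (u a < 0 → ¬(p : ℤ) ∣ u a → e = p) := by
  have : Fact p.Prime := ⟨hp⟩
  have hδ' : δ ^ p - δ = algebraMap L M a := sub_eq_zero.1 hδ
  have hδ0 : δ ≠ 0 := by rintro rfl; exact hδL (zero_mem _)
  let v : Valuation M ℤᵐ⁰ := Valuation.ofInt w hwmul hwadd
  have hvw : ∀ {x : M}, x ≠ 0 → v x = exp (-w x) := Valuation.ofInt_apply hwmul hwadd
  have ha0 : a ≠ 0 := by
    rintro rfl
    rw [map_zero] at hδ'
    have := (splits_X_pow_sub_X_of_charP (k := L) p).mem_range_of_isRoot (i := algebraMap L M)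
      (x := δ) (FiniteField.X_pow_card_sub_X_ne_zero _ hp.one_lt) (by simpa [IsRoot] using hδ')
    exact hδL this
  have hmap0 : ∀ {c : L}, c ≠ 0 → algebraMap L M c ≠ 0 := fun hc => (_root_.map_ne_zero _).2 hc
  have hva : v (algebraMap L M a) = exp (-(e * u a)) := by
    rw [hvw (hmap0 ha0), habove a ha0]
  have hPd : (X ^ p - X - C a : L[X]).natDegree = p := by
    rw [natDegree_sub_C, FiniteField.X_pow_card_sub_X_natDegree_eq _ hp.one_lt]
  have hPm : (X ^ p - X - C a : L[X]).Monic := by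
    rw [sub_sub]
    exact monic_X_pow_sub (by rw [degree_X_add_C]; exact_mod_cast hp.one_lt)
  obtain ⟨x, hx0, hx1⟩ := hwsurj 1
  obtain ⟨f, hfd, rfl⟩ := exists_natDegree_lt_aeval_eq_of_adjoin_eq_top hgen hPm
    (fun h => hp.ne_zero (by rw [← hPd, h, natDegree_one])) (by simp [hδ']) x
  rw [hPd] at hfd
  refine ⟨fun hua => ?_, fun hua hpu => ?_⟩
  · have hδ1 : v δ ≤ 1 := by
      refine v.map_le_one_of_pow_sub_self hp.one_lt ?_
      rw [hδ', hva, ← exp_zero, exp_le_exp]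
      have : 0 ≤ (e : ℤ) * u a := by positivity
      omega
    have : (v.comap (algebraMap L M)).HasExtension v := ⟨Valuation.IsEquiv.refl⟩
    obtain ⟨c, hc⟩ := Valuation.exists_map_algebraMap_eq_of_pow_sub_self
      (v.comap (algebraMap L M)) v hδ' hδ1 hfd hx0
    have hc0 : c ≠ 0 := by
      rintro rfl
      rw [map_zero, map_zero, map_eq_zero] at hc
      exact hx0 hc
    rw [hvw hx0, hvw (hmap0 hc0), exp_inj, neg_inj, hx1, habove c hc0] at hc
    have := Int.eq_one_of_mul_eq_one_right (by positivity) hc.symm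
    exact_mod_cast this
  · have hδw : (p : ℤ) * w δ = e * u a := by
      have h1 : 1 < v δ := by
        by_contra! h
        have : v (δ ^ p - δ) ≤ 1 :=
          v.map_sub_le (by rw [map_pow]; exact pow_le_one₀ zero_le h) h
        rw [hδ', hva, ← exp_zero, exp_le_exp] at this
        have : (e : ℤ) * u a < 0 := mul_neg_of_pos_of_neg (by exact_mod_cast he) hua
        omega
      have h2 : v (δ ^ p - δ) = v δ ^ p := by
        rw [v.map_sub_eq_of_lt_left, map_pow]
        rw [map_pow]
        exact lt_self_pow₀ h1 hp.one_lt
      rw [hδ', hva, hvw hδ0, ← exp_nsmul, exp_inj, nsmul_eq_mul] at h2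
      linarith
    have hpe : p ∣ e := by
      have h := (Nat.prime_iff_prime_int.1 hp).dvd_or_dvd (Dvd.intro _ hδw)
      exact_mod_cast h.resolve_right hpu
    obtain ⟨m, rfl⟩ := hpe
    have hp0 : (p : ℤ) ≠ 0 := by exact_mod_cast hp.ne_zero
    have hm0 : (m : ℤ) ≠ 0 := by
      rintro h
      simp_all
    have hwδ : w δ = m * u a := by
      apply mul_left_cancel₀ hp0
      rw [hδw]
      push_cast
      ring
    have hterm : ∀ i : ℕ, f.coeff i • δ ^ i ≠ 0 →
        v (f.coeff i • δ ^ i) = exp (-(m * (p * u (f.coeff i) + i * u a))) := by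
      intro i hi
      have hci : f.coeff i ≠ 0 := left_ne_zero_of_smul hi
      rw [Algebra.smul_def, map_mul, map_pow, hvw (hmap0 hci), hvw hδ0, habove _ hci, hwδ,
        ← exp_nsmul, ← exp_add, exp_inj]
      push_cast
      ring
    have hsum : aeval δ f = ∑ i ∈ Finset.range p, f.coeff i • δ ^ i := aeval_eq_sum_range' hfd δ
    obtain ⟨i, -, hi, hval⟩ := v.exists_map_sum_eq_of_injOn (Finset.range p)
      (fun i => f.coeff i • δ ^ i) (by
        rintro i ⟨hip, hi⟩ j ⟨hjp, hj⟩ hij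
        simp only [hterm i hi, hterm j hj, exp_inj, neg_inj] at hij
        have h := mul_left_cancel₀ hm0 hij
        have hdvd : (p : ℤ) ∣ ((i : ℤ) - j) * u a := ⟨u (f.coeff j) - u (f.coeff i), by linarith⟩
        have hmod := ((Nat.prime_iff_prime_int.1 hp).dvd_or_dvd hdvd).resolve_right hpu
        have := Int.eq_zero_of_abs_lt_dvd hmod (by
          have := Finset.mem_range.1 hip
          have := Finset.mem_range.1 hjp
          rw [abs_lt]; omega)
        omega) (hsum ▸ hx0)
    rw [← hsum, hvw hx0, hterm i hi, exp_inj, neg_inj, hx1] at hval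
    have := Int.eq_one_of_mul_eq_one_right (by positivity) hval.symm
    have : m = 1 := by exact_mod_cast this
    rw [this, mul_one]
end

section
/- Let F be an algebraically closed field of characteristic p > 0 and set a = 1 if p > 2 and a = 2 if p = 2. Let M be a function field over F, and let t ∈ M be transcendental over F with M/F(t) separable and such that all zeros and poles of t are simple (so that in particular every prime of M occurring in the divisor of t is unramified over F(t)). Let σ, μ ∈ M and assume that every prime v of M with v(σ) < 0 or v(μ) < 0 is unramified over F(t). If t·(σ^{p^a} − σ) = μ^{p^a} − μ, then σ^{p^a} − σ = 0 and μ^{p^a} − μ = 0. -/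
namespace FFPrime

variable {F M : Type*} [Field F] [Field M] [Algebra F M] (P : FFPrime F M)

/-- The valuation of `x` is at least `n`, where `0` has infinite valuation. -/
def Ge (n : ℤ) (x : M) : Prop := x ≠ 0 → n ≤ P.v x

theorem v_one : P.v 1 = 0 := by
  simpa using P.triv 1 one_ne_zero

theorem v_neg (x : M) : P.v (-x) = P.v x := by
  rcases eq_or_ne x 0 with rfl | hx
  · simp
  have h := P.map_mul (-1) x (by simp) hx
  have h₁ := P.triv (-1) (by simp)
  simp only [map_neg, map_one] at h₁
  rw [neg_one_mul] at h
  omega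

theorem v_pow {x : M} (hx : x ≠ 0) (n : ℕ) : P.v (x ^ n) = n * P.v x := by
  induction n with
  | zero => simp [P.v_one]
  | succ n ih =>
    rw [pow_succ, P.map_mul _ _ (pow_ne_zero n hx) hx, ih]
    push_cast
    ring

variable {P}

theorem Ge.mono {m n : ℤ} {x : M} (h : P.Ge n x) (hmn : m ≤ n) : P.Ge m x :=
  fun hx ↦ hmn.trans (h hx)

theorem Ge.neg {n : ℤ} {x : M} (h : P.Ge n x) : P.Ge n (-x) := fun hx ↦ by
  rw [P.v_neg]
  exact h (neg_ne_zero.mp hx)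

theorem Ge.add {n : ℤ} {x y : M} (hx : P.Ge n x) (hy : P.Ge n y) : P.Ge n (x + y) := by
  intro hxy
  rcases eq_or_ne x 0 with rfl | hx₀
  · rw [zero_add] at hxy ⊢
    exact hy hxy
  rcases eq_or_ne y 0 with rfl | hy₀
  · rw [add_zero]
    exact hx hx₀
  exact (le_min (hx hx₀) (hy hy₀)).trans (P.add_min x y hx₀ hy₀ hxy)

theorem Ge.sub {n : ℤ} {x y : M} (hx : P.Ge n x) (hy : P.Ge n y) : P.Ge n (x - y) := by
  rw [sub_eq_add_neg]
  exact hx.add hy.neg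

theorem Ge.mul {m n : ℤ} {x y : M} (hx : P.Ge m x) (hy : P.Ge n y) :
    P.Ge (m + n) (x * y) := by
  intro hxy
  have hx₀ := left_ne_zero_of_mul hxy
  have hy₀ := right_ne_zero_of_mul hxy
  rw [P.map_mul x y hx₀ hy₀]
  exact add_le_add (hx hx₀) (hy hy₀)

theorem ge_algebraMap (c : F) : P.Ge 0 (algebraMap F M c) := fun hc ↦
  (P.triv c fun h ↦ hc (by simp [h])).ge

theorem Ge.left_of_add_of_lt {n : ℤ} {x y : M} (h : P.Ge n (x + y))
    (hlt : y ≠ 0 → P.v x < P.v y) : P.Ge n x := by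
  intro hx
  by_contra! hn
  have hy : P.Ge (P.v x + 1) y := fun hy ↦ hlt hy
  have := ((h.mono (show P.v x + 1 ≤ n by omega)).sub hy)
  rw [add_sub_cancel_right] at this
  have := this hx
  omega

theorem Ge.of_add {n : ℤ} {x y : M} (h : P.Ge n (x + y))
    (hne : x ≠ 0 → y ≠ 0 → P.v x ≠ P.v y) : P.Ge n x ∧ P.Ge n y := by
  rcases eq_or_ne x 0 with rfl | hx
  · exact ⟨fun h ↦ absurd rfl h, by simpa using h⟩
  rcases eq_or_ne y 0 with rfl | hy
  · exact ⟨by simpa using h, fun h ↦ absurd rfl h⟩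
  rcases lt_or_gt_of_ne (hne hx hy) with hlt | hlt
  · have h₁ := h.left_of_add_of_lt fun _ ↦ hlt
    exact ⟨h₁, by simpa using h.sub h₁⟩
  · have h' : P.Ge n (y + x) := by rwa [add_comm]
    have h₁ := h'.left_of_add_of_lt fun _ ↦ hlt
    exact ⟨by simpa using h.sub h₁, h₁⟩

/-- The equation `t (σ ^ q - σ) = μ ^ q - μ` forces `σ` and `μ` to be integral at `P` as soon as
`t` differs from a constant by an element of valuation `±1`. -/
theorem ge_zero_of_frobenius_eq {p a : ℕ} [Fact p.Prime] [CharP M p] (hq : 3 ≤ p ^ a)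
    {t σ μ : M} (d : F) (hπ₀ : t - algebraMap F M d ^ p ^ a ≠ 0)
    (hπ : P.v (t - algebraMap F M d ^ p ^ a) = 1 ∨ P.v (t - algebraMap F M d ^ p ^ a) = -1)
    (heq : t * (σ ^ p ^ a - σ) = μ ^ p ^ a - μ) : P.Ge 0 σ ∧ P.Ge 0 μ := by
  obtain ⟨π, hπ_def⟩ : ∃ π, π = t - algebraMap F M d ^ p ^ a := ⟨_, rfl⟩
  obtain ⟨w, hw_def⟩ : ∃ w, w = algebraMap F M d * σ - μ := ⟨_, rfl⟩
  rw [← hπ_def] at hπ₀ hπ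
  have hw_pow : w ^ p ^ a = algebraMap F M d ^ p ^ a * σ ^ p ^ a - μ ^ p ^ a := by
    rw [hw_def, sub_pow_char_pow, mul_pow]
  have hkey : π * σ ^ p ^ a + w ^ p ^ a =
      π * σ + (w + algebraMap F M (d ^ p ^ a - d) * σ) := by
    rw [hw_pow, hw_def, hπ_def, map_sub, map_pow]
    linear_combination heq
  generalize p ^ a = q at *
  suffices h : P.Ge 0 σ ∧ P.Ge 0 w by
    refine ⟨h.1, ?_⟩
    have : μ = algebraMap F M d * σ - w := by rw [hw_def]; ring
    rw [this]
    simpa using ((ge_algebraMap d).mul h.1).sub (by simpa using h.2)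
  obtain ⟨N, hN₀, hσ, hw, hN⟩ : ∃ N : ℤ, N ≤ 0 ∧ P.Ge N σ ∧ P.Ge N w ∧
      (N = 0 ∨ (σ ≠ 0 ∧ P.v σ = N) ∨ (w ≠ 0 ∧ P.v w = N)) := by
    by_cases h₁ : P.Ge 0 σ <;> by_cases h₂ : P.Ge 0 w
    · exact ⟨0, le_rfl, h₁, h₂, .inl rfl⟩
    all_goals simp only [Ge, Classical.not_imp, not_le] at h₁ h₂
    · exact ⟨P.v w, h₂.2.le, fun h ↦ h₂.2.le.trans (h₁ h), fun _ ↦ le_rfl, .inr (.inr ⟨h₂.1, rfl⟩)⟩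
    · exact ⟨P.v σ, h₁.2.le, fun _ ↦ le_rfl, fun h ↦ h₁.2.le.trans (h₂ h), .inr (.inl ⟨h₁.1, rfl⟩)⟩
    · rcases le_total (P.v σ) (P.v w) with h | h
      · exact ⟨_, h₁.2.le, fun _ ↦ le_rfl, fun _ ↦ h, .inr (.inl ⟨h₁.1, rfl⟩)⟩
      · exact ⟨_, h₂.2.le, fun _ ↦ h, fun _ ↦ le_rfl, .inr (.inr ⟨h₂.1, rfl⟩)⟩
  rcases hN with rfl | hN
  · exact ⟨hσ, hw⟩
  have hv : ∀ x ≠ 0, P.v (π * x ^ q) = P.v π + q * P.v x := fun x hx ↦ by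
    rw [P.map_mul _ _ hπ₀ (pow_ne_zero q hx), P.v_pow hx]
  have hdis : π * σ ^ q ≠ 0 → w ^ q ≠ 0 → P.v (π * σ ^ q) ≠ P.v (w ^ q) := by
    intro h₁ h₂ h
    have hσ₀ : σ ≠ 0 := by rintro rfl; simp [show q ≠ 0 by omega] at h₁
    have hw₀ : w ≠ 0 := by rintro rfl; simp [show q ≠ 0 by omega] at h₂
    rw [hv σ hσ₀, P.v_pow hw₀] at h
    have hdvd : (q : ℤ) ∣ P.v π := ⟨P.v w - P.v σ, by linear_combination h⟩
    have : (q : ℤ) ∣ 1 := by rcases hπ with hπ | hπ <;> simpa [hπ] using hdvd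
    have := Int.le_of_dvd one_pos this
    omega
  have hge : P.Ge (N + min (P.v π) 0) (π * σ ^ q + w ^ q) := by
    rw [hkey]
    refine Ge.add ?_ (Ge.add (hw.mono (by omega)) ?_)
    · exact Ge.mono (Ge.mul (fun _ ↦ le_rfl) hσ) (by omega)
    · exact Ge.mono (Ge.mul (ge_algebraMap _) hσ) (by omega)
  obtain ⟨h₁, h₂⟩ := hge.of_add hdis
  suffices h : N = 0 by
    subst h
    exact ⟨hσ, hw⟩
  have hq' : (3 : ℤ) ≤ q := by exact_mod_cast hq
  have hqN : (q : ℤ) * N ≤ 3 * N := mul_le_mul_of_nonpos_right hq' hN₀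
  rcases hN with ⟨hx, hxN⟩ | ⟨hx, hxN⟩
  · have := h₁ (mul_ne_zero hπ₀ (pow_ne_zero q hx))
    rw [hv σ hx, hxN] at this
    omega
  · have := h₂ (pow_ne_zero q hx)
    rw [P.v_pow hx, hxN] at this
    omega

theorem _root_.Transcendental.sub_algebraMap_ne_zero {t : M} (ht : Transcendental F t) (c : F) :
    t - algebraMap F M c ≠ 0 := fun h ↦ by
  rw [sub_eq_zero.mp h] at ht
  exact ht (isAlgebraic_algebraMap c)

theorem dvd_v_aeval [IsAlgClosed F] {t : M} (ht : Transcendental F t) {m : ℤ}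
    (hm : ∀ c : F, m ∣ P.v (t - algebraMap F M c)) {f : Polynomial F} (hf : f ≠ 0) :
    m ∣ P.v (Polynomial.aeval t f) := by
  rw [(IsAlgClosed.splits f).eq_prod_roots]
  have h : ∀ s : Multiset F,
      Polynomial.aeval t (s.map fun c ↦ Polynomial.X - Polynomial.C c).prod ≠ 0 ∧
        m ∣ P.v (Polynomial.aeval t (s.map fun c ↦ Polynomial.X - Polynomial.C c).prod) := by
    intro s
    induction s using Multiset.induction with
    | empty => simp [P.v_one]
    | cons c s ih =>
      have hc := ht.sub_algebraMap_ne_zero c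
      simp only [Multiset.map_cons, Multiset.prod_cons, _root_.map_mul, map_sub, Polynomial.aeval_X,
        Polynomial.aeval_C]
      refine ⟨mul_ne_zero hc ih.1, ?_⟩
      rw [P.map_mul _ _ hc ih.1]
      exact dvd_add (hm c) ih.2
  have hl : f.leadingCoeff ≠ 0 := Polynomial.leadingCoeff_ne_zero.mpr hf
  rw [_root_.map_mul, Polynomial.aeval_C, P.map_mul _ _ (by simpa using hl) (h _).1, P.triv _ hl, zero_add]
  exact (h _).2

theorem UnramifiedOver.exists_v_sub_eq_one [IsAlgClosed F] {t : M} (h : P.UnramifiedOver t)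
    (ht : Transcendental F t) (ht₀ : P.Ge 0 t) :
    ∃ c : F, P.v (t - algebraMap F M c) = 1 := by
  have hnn (c : F) : 0 ≤ P.v (t - algebraMap F M c) :=
    (ht₀.sub (ge_algebraMap c)) (ht.sub_algebraMap_ne_zero c)
  obtain ⟨c₀, hc₀⟩ : ∃ c₀ : F, ∀ c, c ≠ c₀ → P.v (t - algebraMap F M c) = 0 := by
    by_cases hex : ∃ c : F, P.v (t - algebraMap F M c) ≠ 0
    · obtain ⟨c₀, hc₀⟩ := hex
      refine ⟨c₀, fun c hc ↦ ?_⟩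
      by_contra hne
      have h₁ : P.Ge 1 (t - algebraMap F M c) := fun _ ↦ by have := hnn c; omega
      have h₂ : P.Ge 1 (t - algebraMap F M c₀) := fun _ ↦ by have := hnn c₀; omega
      have h₃ := h₂.sub h₁
      rw [sub_sub_sub_cancel_left, ← map_sub] at h₃
      have := h₃ (by simpa [sub_eq_zero] using hc)
      rw [P.triv _ (sub_ne_zero.mpr hc)] at this
      omega
    · push Not at hex
      exact ⟨0, fun c _ ↦ hex c⟩
  refine ⟨c₀, ?_⟩
  have hdvd (c : F) : P.v (t - algebraMap F M c₀) ∣ P.v (t - algebraMap F M c) := by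
    rcases eq_or_ne c c₀ with rfl | hc
    · rfl
    · rw [hc₀ c hc]
      exact dvd_zero _
  obtain ⟨r, hr, hr₀, hr₁⟩ := h
  obtain ⟨f, g, rfl⟩ := (IntermediateField.mem_adjoin_simple_iff F r).mp hr
  have hf₀ : Polynomial.aeval t f ≠ 0 := fun h ↦ hr₀ (by simp [h])
  have hg₀ : Polynomial.aeval t g ≠ 0 := fun h ↦ hr₀ (by simp [h])
  have hv := P.map_mul _ _ hr₀ hg₀
  rw [div_mul_cancel₀ _ hg₀, hr₁] at hv
  have h₁ := dvd_v_aeval ht hdvd (f := f) (by rintro rfl; simp at hf₀)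
  have h₂ := dvd_v_aeval ht hdvd (f := g) (by rintro rfl; simp at hg₀)
  have h₃ : P.v (t - algebraMap F M c₀) ∣ 1 := by
    rw [show (1 : ℤ) = P.v (Polynomial.aeval t f) - P.v (Polynomial.aeval t g) by omega]
    exact dvd_sub h₁ h₂
  exact Int.eq_one_of_dvd_one (hnn c₀) h₃

open IsDedekindDomain WithZero in
/-- The prime of `M` attached to a maximal ideal of a Dedekind domain with fraction field `M`. -/
noncomputable def ofHeightOneSpectrum_s14 {B : Type*} [CommRing B] [IsDedekindDomain B] [Algebra F B]
    [Algebra B M] [IsScalarTower F B M] [IsFractionRing B M] (w : HeightOneSpectrum B) :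
    FFPrime F M where
  v x := -log (w.valuation M x)
  map_mul x y hx hy := by
    rw [_root_.map_mul, log_mul (by simpa using hx) (by simpa using hy)]
    ring
  add_min x y hx hy hxy := by
    have h := (w.valuation M).map_add x y
    have hx' : w.valuation M x ≠ 0 := by simpa using hx
    have hy' : w.valuation M y ≠ 0 := by simpa using hy
    have hxy' : w.valuation M (x + y) ≠ 0 := by simpa using hxy
    rw [le_max_iff, ← log_le_log hxy' hx', ← log_le_log hxy' hy'] at h
    omega
  surj n := by
    obtain ⟨x, hx⟩ := w.valuation_surjective M (exp (-n))
    refine ⟨x, fun h ↦ ?_, by rw [hx, log_exp, neg_neg]⟩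
    rw [h, map_zero] at hx
    exact exp_ne_zero hx.symm
  triv c hc := by
    have hle (c : F) : w.valuation M (algebraMap F M c) ≤ 1 := by
      rw [IsScalarTower.algebraMap_apply F B M]
      exact w.valuation_le_one _
    have h₁ : w.valuation M (algebraMap F M c) ≠ 0 := by simpa using hc
    have h₂ := hle c⁻¹
    rw [map_inv₀, map_inv₀] at h₂
    have : w.valuation M (algebraMap F M c) = 1 :=
      le_antisymm (hle c) ((inv_le_one₀ (zero_lt_iff.mpr h₁)).mp h₂)
    rw [this, log_one, neg_zero]

open IsDedekindDomain WithZero in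
theorem mem_range_of_forall_ge {B : Type*} [CommRing B] [IsDedekindDomain B] [Algebra F B]
    [Algebra B M] [IsScalarTower F B M] [IsFractionRing B M] {x : M}
    (hx : ∀ P : FFPrime F M, P.Ge 0 x) : x ∈ (algebraMap B M).range := by
  refine HeightOneSpectrum.mem_integers_of_valuation_le_one M x fun w ↦ ?_
  rcases eq_or_ne x 0 with rfl | hx₀
  · simp
  have h : 0 ≤ -log (w.valuation M x) := hx (ofHeightOneSpectrum_s14 w) hx₀
  rw [← exp_zero, ← log_le_iff_le_exp (by simpa using hx₀)]
  omega

open scoped IntermediateField.algebraAdjoinAdjoin in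
theorem coeff_minpoly_mem_adjoin {u : M} (hu : Transcendental F u) {K : IntermediateField F M}
    (hK : IntermediateField.adjoin F {u} = K) [FiniteDimensional K M] [Algebra.IsSeparable K M]
    {x : M} (hx : ∀ P : FFPrime F M, P.Ge 0 x) (i : ℕ) :
    ((minpoly K x).coeff i : M) ∈ Algebra.adjoin F {u} := by
  subst hK
  let A := Algebra.adjoin F {u}
  let K := IntermediateField.adjoin F {u}
  have : IsPrincipalIdealRing A :=
    IsPrincipalIdealRing.of_surjective (Polynomial.algEquivOfTranscendental F u hu)
      (AlgEquiv.surjective _)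
  have : IsDedekindDomain (integralClosure A M) := integralClosure.isDedekindDomain A K M
  have : IsFractionRing (integralClosure A M) M :=
    integralClosure.isFractionRing_of_finite_extension K M
  have : IsScalarTower F (integralClosure A M) M := .of_algebraMap_eq fun _ ↦ rfl
  obtain ⟨⟨y, hy⟩, rfl⟩ := mem_range_of_forall_ge (B := integralClosure A M) hx
  have hint : IsIntegral A y := hy
  change ((minpoly K y).coeff i : M) ∈ A
  rw [minpoly.isIntegrallyClosed_eq_field_fractions' K hint, Polynomial.coeff_map]
  exact ((minpoly A y).coeff i).2

end FFPrime

theorem Transcendental.mem_range_of_mem_adjoin_of_mem_adjoin_inv {F M : Type*} [Field F] [Field M]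
    [Algebra F M] {t : M} (ht : Transcendental F t) {x : M} (h₁ : x ∈ Algebra.adjoin F {t})
    (h₂ : x ∈ Algebra.adjoin F {t⁻¹}) : x ∈ (algebraMap F M).range := by
  rw [Algebra.adjoin_singleton_eq_range_aeval] at h₁ h₂
  obtain ⟨f, rfl⟩ := h₁
  obtain ⟨g, hg⟩ := h₂
  change Polynomial.aeval t⁻¹ g = Polynomial.aeval t f at hg
  change Polynomial.aeval t f ∈ _
  have ht₀ : t ≠ 0 := by simpa using ht.sub_algebraMap_ne_zero 0
  let := invertibleOfNonzero (inv_ne_zero ht₀)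
  have hrev := Polynomial.eval₂_reverse_mul_pow (algebraMap F M) t⁻¹ g
  rw [invOf_eq_inv, inv_inv, ← Polynomial.aeval_def, ← Polynomial.aeval_def, hg] at hrev
  have hpoly : g.reverse = f * Polynomial.X ^ g.natDegree := by
    refine transcendental_iff_injective.mp ht ?_
    rw [_root_.map_mul, map_pow, Polynomial.aeval_X, ← hrev, mul_assoc, ← mul_pow,
      inv_mul_cancel₀ ht₀, one_pow, mul_one]
  rcases eq_or_ne f 0 with rfl | hf
  · exact ⟨0, by simp⟩
  have hdeg := congrArg Polynomial.natDegree hpoly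
  rw [Polynomial.natDegree_mul_X_pow _ hf] at hdeg
  have := g.reverse_natDegree_le
  obtain ⟨c, rfl⟩ := Polynomial.natDegree_eq_zero.mp (show f.natDegree = 0 by omega)
  exact ⟨c, by simp⟩

/-- Over an algebraically closed constant field, a function without poles is constant. -/
theorem FFPrime.mem_range_algebraMap_of_forall_ge {F M : Type*} [Field F] [Field M] [Algebra F M]
    [IsAlgClosed F] {t : M} (ht : Transcendental F t)
    (hfin : FiniteDimensional (IntermediateField.adjoin F {t}) M)
    (hsep : Algebra.IsSeparable (IntermediateField.adjoin F {t}) M)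
    {x : M} (hx : ∀ P : FFPrime F M, P.Ge 0 x) : x ∈ (algebraMap F M).range := by
  have hinv : IntermediateField.adjoin F {t⁻¹} = IntermediateField.adjoin F {t} := by
    apply le_antisymm <;> rw [IntermediateField.adjoin_simple_le_iff]
    · exact inv_mem (IntermediateField.mem_adjoin_simple_self F t)
    · simpa using inv_mem (IntermediateField.mem_adjoin_simple_self F t⁻¹)
  have ht' : Transcendental F t⁻¹ := fun h ↦ ht (by simpa using h.inv)
  have hcoeff (i : ℕ) : (minpoly (IntermediateField.adjoin F {t}) x).coeff i ∈
      Set.range (algebraMap F (IntermediateField.adjoin F {t})) := by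
    obtain ⟨c, hc⟩ := ht.mem_range_of_mem_adjoin_of_mem_adjoin_inv
      (coeff_minpoly_mem_adjoin ht rfl hx i) (coeff_minpoly_mem_adjoin ht' hinv hx i)
    exact ⟨c, Subtype.ext hc⟩
  obtain ⟨f, hf⟩ := (Polynomial.lifts_iff_coeff_lifts _).mpr hcoeff
  have hint : IsIntegral (IntermediateField.adjoin F {t}) x := Algebra.IsIntegral.isIntegral x
  have halg : IsAlgebraic F x := by
    refine ⟨f, ?_, ?_⟩
    · rintro rfl
      exact minpoly.ne_zero hint (by simpa using hf.symm)
    · rw [← Polynomial.aeval_map_algebraMap (IntermediateField.adjoin F {t})]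
      change f.map _ = _ at hf
      rw [hf, minpoly.aeval]
  exact minpoly.mem_range_of_degree_eq_one F x
    (IsAlgClosed.degree_eq_one_of_irreducible F (minpoly.irreducible halg.isIntegral))

/-- Let `F` be algebraically closed of characteristic `p > 0`, with `a = 1` if `p > 2`
and `a = 2` if `p = 2`. Let `M` be a function field over `F` and `t ∈ M` transcendental
with `M/F(t)` finite separable and all zeros and poles of `t` simple. Let `σ, μ ∈ M` be
such that every prime at which `σ` or `μ` has a pole is unramified over `F(t)`. If
`t·(σ^{p^a} - σ) = μ^{p^a} - μ`, then `σ^{p^a} - σ = 0` and `μ^{p^a} - μ = 0`. -/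
theorem stmt_14 {F M : Type*} [Field F] [Field M] [Algebra F M] [IsAlgClosed F]
    (p : ℕ) (hp : p.Prime) [CharP F p]
    (a : ℕ) (ha : (2 < p ∧ a = 1) ∨ (p = 2 ∧ a = 2))
    (t : M) (htrans : Transcendental F t)
    (hfin : FiniteDimensional (IntermediateField.adjoin F {t}) M)
    (hsep : Algebra.IsSeparable (IntermediateField.adjoin F {t}) M)
    (hsimple : ∀ P : FFPrime F M, P.v t ∈ ({-1, 0, 1} : Set ℤ))
    (σ μ : M)
    (hram : ∀ P : FFPrime F M,
      (σ ≠ 0 ∧ P.v σ < 0) ∨ (μ ≠ 0 ∧ P.v μ < 0) → P.UnramifiedOver t)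
    (heq : t * (σ ^ p ^ a - σ) = μ ^ p ^ a - μ) :
    σ ^ p ^ a - σ = 0 ∧ μ ^ p ^ a - μ = 0 := by
  have : Fact p.Prime := ⟨hp⟩
  have : CharP M p := charP_of_injective_algebraMap (algebraMap F M).injective p
  have hq : 3 ≤ p ^ a := by
    rcases ha with ⟨h, rfl⟩ | ⟨rfl, rfl⟩
    · rwa [pow_one]
    · norm_num
  have ht₀ : t ≠ 0 := by simpa using htrans.sub_algebraMap_ne_zero 0
  have hint (P : FFPrime F M) : P.Ge 0 σ ∧ P.Ge 0 μ := by
    have hd₀ : t - algebraMap F M 0 ^ p ^ a = t := by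
      rw [map_zero, zero_pow (by omega), sub_zero]
    have h₀ (h : P.v t = 1 ∨ P.v t = -1) : P.Ge 0 σ ∧ P.Ge 0 μ :=
      P.ge_zero_of_frobenius_eq hq 0 (by rwa [hd₀]) (by rwa [hd₀]) heq
    rcases hsimple P with h | h | h
    · exact h₀ (.inr h)
    · by_contra hpole
      have hunr := hram P (by
        simp only [FFPrime.Ge] at hpole
        by_contra! hno
        exact hpole hno)
      obtain ⟨c, hc⟩ := hunr.exists_v_sub_eq_one htrans fun _ ↦ h.ge
      obtain ⟨d, rfl⟩ := IsAlgClosed.exists_pow_nat_eq c (show 0 < p ^ a by omega)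
      have hne := htrans.sub_algebraMap_ne_zero (d ^ p ^ a)
      rw [map_pow] at hc hne
      exact hpole (P.ge_zero_of_frobenius_eq hq d hne (.inl hc) heq)
    · exact h₀ (.inl h)
  obtain ⟨s, rfl⟩ := FFPrime.mem_range_algebraMap_of_forall_ge htrans hfin hsep fun P ↦ (hint P).1
  obtain ⟨m, rfl⟩ := FFPrime.mem_range_algebraMap_of_forall_ge htrans hfin hsep fun P ↦ (hint P).2
  simp only [← map_pow, ← map_sub] at heq ⊢
  have hs : s ^ p ^ a - s = 0 := by
    by_contra hne
    refine htrans.sub_algebraMap_ne_zero ((m ^ p ^ a - m) / (s ^ p ^ a - s)) ?_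
    rw [map_div₀, ← heq, mul_div_cancel_right₀ _ ((map_ne_zero _).mpr hne), sub_self]
  rw [hs, map_zero, mul_zero] at heq
  exact ⟨by rw [hs, map_zero], heq.symm⟩
end
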